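/- Let $\mu$ be a finite symmetric nonnegative Borel measure on $\mathbb{R}^d$ with zero-order Lévy operator $\mathcal{L}$, and let $h\colon\mathbb{R}\to\mathbb{R}$ be Lipschitz with weak derivative $h'$ of bounded variation. Then for any $\phi\in L^\infty(\mathbb{R}^d)$ with compact support and $\mathcal{L}[\phi]\in L^1(\mathbb{R}^d)$, one has $\|\mathcal{L}[h(\phi)]\|_{L^1(\mathbb{R}^d)} \le \big(\|h'\|_{L^\infty(\mathbb{R})}+|h'|_{TV(\mathbb{R})}\big)\,\|\mathcal{L}[\phi]\|_{L^1(\mathbb{R}^d)}$. -/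

import Mathlib

open MeasureTheory Filter Topology
open scoped ENNReal NNReal

/-!
Let `v` be the variation function of `h'` and `H` a primitive of `v`. Since `v + h'` and `v - h'`
are monotone, `H + h` and `H - h` are convex, so the first-order Taylor remainders of `h` are
dominated by those of `H`. Integrating this domination against `μ` gives, almost everywhere,
`|𝓛[h ∘ φ] - h'(φ) 𝓛[φ]| ≤ 𝓛[H ∘ φ] - v(φ) 𝓛[φ]`. By translation invariance `𝓛[H ∘ φ]` has mean
zero, so the right-hand side integrates to at most `|h'|_{TV} ‖𝓛[φ]‖_{L¹}`.
-/

section Primitive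

lemma mul_sub_le_intervalIntegral_of_monotone {w : ℝ → ℝ} (hw : Monotone w) (a b : ℝ) :
    w a * (b - a) ≤ ∫ t in a..b, w t := by
  have hconst : ∫ _ in a..b, w a = w a * (b - a) := by
    rw [intervalIntegral.integral_const, smul_eq_mul, mul_comm]
  rw [← hconst]
  rcases le_total a b with hab | hba
  · exact intervalIntegral.integral_mono_on hab intervalIntegrable_const hw.intervalIntegrable
      fun t ht => hw ht.1
  · rw [intervalIntegral.integral_symm b a, intervalIntegral.integral_symm b a, neg_le_neg_iff]
    exact intervalIntegral.integral_mono_on hba hw.intervalIntegrable intervalIntegrable_const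
      fun t ht => hw ht.2

lemma abs_intervalIntegral_sub_mul_le_variationOnFromTo {g : ℝ → ℝ}
    (hg : LocallyBoundedVariationOn g Set.univ) (c a b : ℝ) :
    |(∫ t in a..b, g t) - g a * (b - a)| ≤
      (∫ t in a..b, variationOnFromTo g Set.univ c t)
        - variationOnFromTo g Set.univ c a * (b - a) := by
  set v := variationOnFromTo g Set.univ c
  have hv : Monotone v := monotoneOn_univ.1 (variationOnFromTo.monotoneOn hg trivial)
  have hadd : Monotone (v + g) :=
    monotoneOn_univ.1 (variationOnFromTo.add_self_monotoneOn hg trivial)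
  have hsub : Monotone (v - g) :=
    monotoneOn_univ.1 (variationOnFromTo.sub_self_monotoneOn hg trivial)
  have hvint : IntervalIntegrable v volume a b := hv.intervalIntegrable
  have hgint : IntervalIntegrable g volume a b := by
    simpa only [Pi.sub_apply, sub_sub_cancel] using hvint.sub hsub.intervalIntegrable
  have hadd_le := mul_sub_le_intervalIntegral_of_monotone hadd a b
  have hsub_le := mul_sub_le_intervalIntegral_of_monotone hsub a b
  simp only [Pi.add_apply, Pi.sub_apply, intervalIntegral.integral_add hvint hgint,
    intervalIntegral.integral_sub hvint hgint] at hadd_le hsub_le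
  exact abs_le.2 ⟨by linarith, by linarith⟩

lemma lipschitzWith_of_sub_eq_intervalIntegral {F : Type*} [NormedAddCommGroup F]
    [NormedSpace ℝ F] {f f' : ℝ → F} {K : ℝ≥0}
    (hf : ∀ a b : ℝ, f b - f a = ∫ t in a..b, f' t) (hK : ∀ t, ‖f' t‖ ≤ K) :
    LipschitzWith K f :=
  LipschitzWith.of_dist_le_mul fun x y => by
    rw [dist_eq_norm, Real.dist_eq, hf y x]
    exact intervalIntegral.norm_integral_le_of_norm_le_const fun t _ => hK t

lemma exists_lipschitzWith_abs_intervalIntegral_sub_mul_le {g : ℝ → ℝ}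
    (hg : BoundedVariationOn g Set.univ) :
    ∃ H v : ℝ → ℝ, LipschitzWith (eVariationOn g Set.univ).toNNReal H ∧ Measurable v ∧
      (∀ t, |v t| ≤ (eVariationOn g Set.univ).toReal) ∧
      ∀ a b, |(∫ t in a..b, g t) - g a * (b - a)| ≤ H b - H a - v a * (b - a) := by
  set v := variationOnFromTo g Set.univ 0
  have hvmono : Monotone v :=
    monotoneOn_univ.1 (variationOnFromTo.monotoneOn hg.locallyBoundedVariationOn trivial)
  have hvbound (t : ℝ) : |v t| ≤ (eVariationOn g Set.univ).toReal :=
    variationOnFromTo.abs_le_eVariationOn hg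
  have hprim (a b : ℝ) : (∫ t in (0 : ℝ)..b, v t) - (∫ t in (0 : ℝ)..a, v t) = ∫ t in a..b, v t :=
    intervalIntegral.integral_interval_sub_left hvmono.intervalIntegrable
      hvmono.intervalIntegrable
  refine ⟨fun s => ∫ t in (0 : ℝ)..s, v t, v,
    lipschitzWith_of_sub_eq_intervalIntegral hprim hvbound, hvmono.measurable, hvbound,
    fun a b => ?_⟩
  rw [hprim]
  exact abs_intervalIntegral_sub_mul_le_variationOnFromTo hg.locallyBoundedVariationOn 0 a b

end Primitive

/-- The zero-order Lévy operator `𝓛[f](x) = ∫ (f (x + z) - f x) dμ(z)` with jump measure `μ`.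
As a Bochner integral it takes the junk value `0` at points `x` where the increments of `f` are not
`μ`-integrable. -/
noncomputable def levyOperator {E F : Type*} [Add E] [MeasurableSpace E] [NormedAddCommGroup F]
    [NormedSpace ℝ F] (μ : Measure E) (f : E → F) (x : E) : F :=
  ∫ z, (f (x + z) - f x) ∂μ

lemma levyOperator_sub_const {E F : Type*} [Add E] [MeasurableSpace E] [NormedAddCommGroup F]
    [NormedSpace ℝ F] (μ : Measure E) (f : E → F) (c : F) :
    levyOperator μ (fun x => f x - c) = levyOperator μ f := by
  funext x
  simp only [levyOperator, sub_sub_sub_cancel_right]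

section Pointwise

variable {E : Type*} [Add E] [MeasurableSpace E] {μ : Measure E} {φ : E → ℝ} {x : E}

lemma levyOperator_comp_sub_mul {f : ℝ → ℝ} (hφ : Integrable (fun z => φ (x + z) - φ x) μ)
    (hf : Integrable (fun z => f (φ (x + z)) - f (φ x)) μ) (r : ℝ) :
    levyOperator μ (f ∘ φ) x - r * levyOperator μ φ x =
      ∫ z, (f (φ (x + z)) - f (φ x) - r * (φ (x + z) - φ x)) ∂μ := by
  rw [integral_sub hf (hφ.const_mul r), integral_const_mul]
  rfl

lemma abs_levyOperator_comp_sub_mul_le {h g H v : ℝ → ℝ}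
    (hrem : ∀ a b, |h b - h a - g a * (b - a)| ≤ H b - H a - v a * (b - a))
    (hφ : Integrable (fun z => φ (x + z) - φ x) μ)
    (hh : Integrable (fun z => h (φ (x + z)) - h (φ x)) μ)
    (hH : Integrable (fun z => H (φ (x + z)) - H (φ x)) μ) :
    |levyOperator μ (h ∘ φ) x - g (φ x) * levyOperator μ φ x| ≤
      levyOperator μ (H ∘ φ) x - v (φ x) * levyOperator μ φ x := by
  have hmajorant : Integrable (fun z => H (φ (x + z)) - H (φ x) - v (φ x) * (φ (x + z) - φ x)) μ :=
    hH.sub (hφ.const_mul (v (φ x)))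
  rw [levyOperator_comp_sub_mul hφ hh, levyOperator_comp_sub_mul hφ hH, ← Real.norm_eq_abs]
  exact norm_integral_le_of_norm_le hmajorant (Eventually.of_forall fun z => hrem (φ x) (φ (x + z)))

end Pointwise

lemma integrable_sub_const_of_lipschitzWith_comp {α F G : Type*} [MeasurableSpace α]
    {ν : Measure α} [NormedAddCommGroup F] [NormedAddCommGroup G] {K : ℝ≥0} {g : F → G}
    (hg : LipschitzWith K g) {f : α → F} (hf : Integrable f ν) :
    Integrable (fun x => g (f x) - g 0) ν := by
  have hg0 : LipschitzWith K fun y => g y - g 0 := LipschitzWith.of_dist_le_mul fun y z => by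
    simpa only [dist_sub_right] using hg.dist_le_mul y z
  exact memLp_one_iff_integrable.1 (hg0.comp_memLp (sub_self _) (memLp_one_iff_integrable.2 hf))

section Invariant

variable {E F G : Type*} [AddGroup E] [MeasurableSpace E] [MeasurableAdd₂ E]
  [NormedAddCommGroup F] [NormedAddCommGroup G]
  {ν μ : Measure E} [SFinite ν] [ν.IsAddRightInvariant] [IsFiniteMeasure μ]

lemma integrable_prod_translate_sub {f : E → F} (hf : Integrable f ν) :
    Integrable (fun p : E × E => f (p.1 + p.2) - f p.1) (ν.prod μ) :=
  ((measurePreserving_add_prod ν μ).integrable_comp_of_integrable (hf.comp_fst μ)).sub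
    (hf.comp_fst μ)

lemma ae_integrable_translate_sub {f : E → F} (hf : Integrable f ν) :
    ∀ᵐ x ∂ν, Integrable (fun z => f (x + z) - f x) μ :=
  (integrable_prod_translate_sub hf).prod_right_ae

lemma ae_integrable_translate_comp_sub {φ : E → F} {K : ℝ≥0} {f : F → G} (hφ : Integrable φ ν)
    (hf : LipschitzWith K f) : ∀ᵐ x ∂ν, Integrable (fun z => f (φ (x + z)) - f (φ x)) μ := by
  simpa only [sub_sub_sub_cancel_right] using
    ae_integrable_translate_sub (μ := μ) (integrable_sub_const_of_lipschitzWith_comp hf hφ)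

variable [NormedSpace ℝ G]

lemma integrable_levyOperator {f : E → G} (hf : Integrable f ν) :
    Integrable (levyOperator μ f) ν :=
  (integrable_prod_translate_sub hf).integral_prod_left

lemma integral_levyOperator_eq_zero {f : E → G} (hf : Integrable f ν) :
    ∫ x, levyOperator μ f x ∂ν = 0 := by
  have hslice (z : E) : ∫ x, (f (x + z) - f x) ∂ν = 0 := by
    rw [integral_sub (hf.comp_add_right z) hf, integral_add_right_eq_self f z, sub_self]
  simp only [levyOperator]
  rw [integral_integral_swap (integrable_prod_translate_sub hf)]
  simp only [hslice, integral_zero]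

variable {φ : E → F} {K : ℝ≥0} {f : F → G}

lemma integrable_levyOperator_comp (hφ : Integrable φ ν) (hf : LipschitzWith K f) :
    Integrable (levyOperator μ (f ∘ φ)) ν := by
  rw [← levyOperator_sub_const μ (f ∘ φ) (f 0)]
  exact integrable_levyOperator (integrable_sub_const_of_lipschitzWith_comp hf hφ)

lemma integral_levyOperator_comp_eq_zero (hφ : Integrable φ ν) (hf : LipschitzWith K f) :
    ∫ x, levyOperator μ (f ∘ φ) x ∂ν = 0 := by
  rw [← levyOperator_sub_const μ (f ∘ φ) (f 0)]
  exact integral_levyOperator_eq_zero (integrable_sub_const_of_lipschitzWith_comp hf hφ)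

end Invariant

section Composition

variable {E : Type*} [AddGroup E] [MeasurableSpace E] [MeasurableAdd₂ E]
  {ν μ : Measure E} [SFinite ν] [ν.IsAddRightInvariant] [IsFiniteMeasure μ]
  {φ : E → ℝ} {h g H v : ℝ → ℝ} {K K' : ℝ≥0} {C V : ℝ}

lemma integrable_mul_levyOperator (hφ : Integrable φ ν) (hv : Measurable v)
    (hV : ∀ t, |v t| ≤ V) : Integrable (fun x => v (φ x) * levyOperator μ φ x) ν :=
  (integrable_levyOperator hφ).bdd_mul
    (hv.comp_aemeasurable hφ.aestronglyMeasurable.aemeasurable).aestronglyMeasurable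
    (Eventually.of_forall fun x => hV (φ x))

lemma integral_levyOperator_comp_sub_mul_le (hφ : Integrable φ ν) (hH : LipschitzWith K H)
    (hv : Measurable v) (hV : ∀ t, |v t| ≤ V) :
    ∫ x, (levyOperator μ (H ∘ φ) x - v (φ x) * levyOperator μ φ x) ∂ν ≤
      V * ∫ x, |levyOperator μ φ x| ∂ν := by
  have hvL : Integrable (fun x => v (φ x) * levyOperator μ φ x) ν :=
    integrable_mul_levyOperator hφ hv hV
  rw [integral_sub (integrable_levyOperator_comp hφ hH) hvL,
    integral_levyOperator_comp_eq_zero hφ hH, zero_sub, ← integral_neg, ← integral_const_mul]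
  refine integral_mono hvL.neg ((integrable_levyOperator hφ).abs.const_mul V) fun x => ?_
  calc -(v (φ x) * levyOperator μ φ x) ≤ |v (φ x)| * |levyOperator μ φ x| :=
        (neg_le_abs _).trans_eq (abs_mul _ _)
    _ ≤ V * |levyOperator μ φ x| := mul_le_mul_of_nonneg_right (hV _) (abs_nonneg _)

lemma ae_abs_levyOperator_comp_le (hφ : Integrable φ ν) (hh : LipschitzWith K h)
    (hg : ∀ t, |g t| ≤ C) (hH : LipschitzWith K' H)
    (hrem : ∀ a b, |h b - h a - g a * (b - a)| ≤ H b - H a - v a * (b - a)) :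
    ∀ᵐ x ∂ν, |levyOperator μ (h ∘ φ) x| ≤
      C * |levyOperator μ φ x| + (levyOperator μ (H ∘ φ) x - v (φ x) * levyOperator μ φ x) := by
  filter_upwards [ae_integrable_translate_sub (μ := μ) hφ,
    ae_integrable_translate_comp_sub (μ := μ) hφ hh,
    ae_integrable_translate_comp_sub (μ := μ) hφ hH] with x hφx hhx hHx
  calc |levyOperator μ (h ∘ φ) x|
      ≤ |g (φ x) * levyOperator μ φ x|
          + |levyOperator μ (h ∘ φ) x - g (φ x) * levyOperator μ φ x| := by
        simpa only [add_sub_cancel] using abs_add_le (g (φ x) * levyOperator μ φ x)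
          (levyOperator μ (h ∘ φ) x - g (φ x) * levyOperator μ φ x)
    _ ≤ C * |levyOperator μ φ x|
          + (levyOperator μ (H ∘ φ) x - v (φ x) * levyOperator μ φ x) := by
        rw [abs_mul]
        exact add_le_add (mul_le_mul_of_nonneg_right (hg _) (abs_nonneg _))
          (abs_levyOperator_comp_sub_mul_le hrem hφx hhx hHx)

lemma integral_abs_levyOperator_comp_le (hφ : Integrable φ ν) (hh : LipschitzWith K h)
    (hg : ∀ t, |g t| ≤ C) (hH : LipschitzWith K' H) (hv : Measurable v) (hV : ∀ t, |v t| ≤ V)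
    (hrem : ∀ a b, |h b - h a - g a * (b - a)| ≤ H b - H a - v a * (b - a)) :
    ∫ x, |levyOperator μ (h ∘ φ) x| ∂ν ≤ (C + V) * ∫ x, |levyOperator μ φ x| ∂ν := by
  have hCL : Integrable (fun x => C * |levyOperator μ φ x|) ν :=
    (integrable_levyOperator hφ).abs.const_mul C
  have hHL : Integrable
      (fun x => levyOperator μ (H ∘ φ) x - v (φ x) * levyOperator μ φ x) ν :=
    (integrable_levyOperator_comp hφ hH).sub (integrable_mul_levyOperator hφ hv hV)
  calc ∫ x, |levyOperator μ (h ∘ φ) x| ∂ν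
      ≤ ∫ x, (C * |levyOperator μ φ x|
          + (levyOperator μ (H ∘ φ) x - v (φ x) * levyOperator μ φ x)) ∂ν :=
        integral_mono_ae (integrable_levyOperator_comp hφ hh).abs (hCL.add hHL)
          (ae_abs_levyOperator_comp_le hφ hh hg hH hrem)
    _ ≤ (C + V) * ∫ x, |levyOperator μ φ x| ∂ν := by
        rw [integral_add hCL hHL, integral_const_mul, add_mul]
        exact add_le_add_right (integral_levyOperator_comp_sub_mul_le hφ hH hv hV) _

end Composition

theorem stmt7_general {E : Type*} [AddGroup E] [MeasurableSpace E] [MeasurableAdd₂ E]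
    {ν μ : Measure E} [SFinite ν] [ν.IsAddRightInvariant] [IsFiniteMeasure μ] {h h' : ℝ → ℝ}
    (hweak : ∀ a c : ℝ, h c - h a = ∫ t in a..c, h' t) {C1 : ℝ} (hC1 : ∀ t, |h' t| ≤ C1)
    (hTV : BoundedVariationOn h' Set.univ) {φ : E → ℝ} (hφ : Integrable φ ν) :
    ∫⁻ x, ENNReal.ofReal |levyOperator μ (h ∘ φ) x| ∂ν ≤
      ENNReal.ofReal (C1 + (eVariationOn h' Set.univ).toReal)
        * ∫⁻ x, ENNReal.ofReal |levyOperator μ φ x| ∂ν := by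
  have hh : LipschitzWith C1.toNNReal h :=
    lipschitzWith_of_sub_eq_intervalIntegral hweak fun t => (hC1 t).trans (Real.le_coe_toNNReal C1)
  obtain ⟨H, v, hH, hv, hvbound, hrem⟩ := exists_lipschitzWith_abs_intervalIntegral_sub_mul_le hTV
  have hnonneg : 0 ≤ C1 + (eVariationOn h' Set.univ).toReal :=
    add_nonneg ((abs_nonneg _).trans (hC1 0)) ENNReal.toReal_nonneg
  rw [← ofReal_integral_eq_lintegral_ofReal (integrable_levyOperator_comp hφ hh).abs
      (Eventually.of_forall fun _ => abs_nonneg _),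
    ← ofReal_integral_eq_lintegral_ofReal (integrable_levyOperator hφ).abs
      (Eventually.of_forall fun _ => abs_nonneg _), ← ENNReal.ofReal_mul hnonneg]
  exact ENNReal.ofReal_le_ofReal
    (integral_abs_levyOperator_comp_le hφ hh hC1 hH hv hvbound
      fun a b => (hweak a b).symm ▸ hrem a b)

/-- `L¹` bound for a zero-order Lévy operator applied to a composition: if `h` is
Lipschitz with weak derivative `h'` bounded (by `C1`) and of bounded variation, and
`φ` is bounded, measurable, compactly supported with `𝓛[φ] ∈ L¹`, then
`‖𝓛[h∘φ]‖_{L¹} ≤ (‖h'‖_∞ + |h'|_{TV}) ‖𝓛[φ]‖_{L¹}`. -/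
theorem stmt7 (d : ℕ) (μ : Measure (EuclideanSpace ℝ (Fin d))) [IsFiniteMeasure μ]
    (hsym : μ.map (fun z => -z) = μ)
    (h h' : ℝ → ℝ)
    (hweak : ∀ a c : ℝ, h c - h a = ∫ t in a..c, h' t)
    (C1 : ℝ) (hC1 : ∀ t, |h' t| ≤ C1)
    (hTV : eVariationOn h' Set.univ ≠ ⊤)
    (φ : EuclideanSpace ℝ (Fin d) → ℝ)
    (hφm : Measurable φ) (Cφ : ℝ) (hφb : ∀ x, |φ x| ≤ Cφ)
    (hcs : HasCompactSupport φ)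
    (hL1 : (∫⁻ x, ENNReal.ofReal |∫ z, (φ (x + z) - φ x) ∂μ| ∂volume) ≠ ⊤) :
    (∫⁻ x, ENNReal.ofReal |∫ z, (h (φ (x + z)) - h (φ x)) ∂μ| ∂volume)
      ≤ ENNReal.ofReal (C1 + (eVariationOn h' Set.univ).toReal)
          * ∫⁻ x, ENNReal.ofReal |∫ z, (φ (x + z) - φ x) ∂μ| ∂volume := by
  exact stmt7_general hweak hC1 hTV (memLp_one_iff_integrable.1
    (hcs.memLp_of_bound hφm.aestronglyMeasurable Cφ (Eventually.of_forall hφb)))
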